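/- arXiv:2509.20994 — 2 statements merged into one kernel-verified Lean document; each statement's English description precedes it below -/
import Mathlib

section
/- Every finite simple graph G with m edges admits a 3-partition (V_1, V_2, V_3) such that (i) max_{1≤i≤3} e(V_i) ≤ m/9 + (1/9)·h(m), and (ii) e(V_1, V_2, V_3) ≥ (2/3)·m + (1/3)·h(m). -/
open Finset

noncomputable def hfun (x : ℝ) : ℝ := Real.sqrt (2 * x + 1 / 4) - 1 / 2

variable {V : Type*} [Fintype V] [DecidableEq V]

/-- Number of edges of `G` with both endpoints in `S`. -/
def eIn (G : SimpleGraph V) [DecidableRel G.Adj] (S : Finset V) : ℕ :=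
  (Finset.univ.filter (fun p : V × V => G.Adj p.1 p.2 ∧ p.1 ∈ S ∧ p.2 ∈ S)).card / 2

/-- Number of edges of `G` with one endpoint in `S` and the other in `T` (for disjoint `S`, `T`). -/
def eCross (G : SimpleGraph V) [DecidableRel G.Adj] (S T : Finset V) : ℕ :=
  (Finset.univ.filter (fun p : V × V => G.Adj p.1 p.2 ∧ p.1 ∈ S ∧ p.2 ∈ T)).card

/-- `P` is a partition of the vertex set into `k` pairwise disjoint (possibly empty) parts. -/
def IsKPartition {k : ℕ} (P : Fin k → Finset V) : Prop :=
  (∀ i j : Fin k, i ≠ j → Disjoint (P i) (P j)) ∧ ∀ v : V, ∃ i, v ∈ P i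

/-- The number of crossing edges of a `k`-partition. -/
def crossTotal (G : SimpleGraph V) [DecidableRel G.Adj] {k : ℕ} (P : Fin k → Finset V) : ℕ :=
  ∑ i : Fin k, ∑ j : Fin k, if i < j then eCross G (P i) (P j) else 0

/-- `f_k(G)`: the maximum number of crossing edges over all `k`-partitions of `G`. -/
noncomputable def maxCut (G : SimpleGraph V) [DecidableRel G.Adj] (k : ℕ) : ℕ :=
  sSup {n : ℕ | ∃ P : Fin k → Finset V, IsKPartition P ∧ crossTotal G P = n}

/-!
Write `x = h(m) / 3`, so that `G` has `3x(3x + 1)` darts and the claim allows `x(x + 1)` darts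
inside each part and `x(3x - 1)` inside all parts together. The second bound alone is due to
Edwards: a proper coloring with as few colors as possible has an edge between any two classes, and
merging the classes at random into nearly equal groups leaves few edges uncut.

Among the maximum cuts choose one whose internal edges are spread most evenly. If a part is still
too heavy, take a minimal heavy subset of it and remove a vertex of minimum degree. The resulting
set `W` becomes a part of the new partition. Every vertex of `W` has at least twice as many
neighbors outside its old part as inside, so few edges are disjoint from `W`, and these edges can
be treated in the same way with one part less.
-/

section Darts

variable {α : Type*} (G : SimpleGraph α) [DecidableRel G.Adj]

/-- The number of neighbors of `v` in `S`. -/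
def degIn (S : Finset α) (v : α) : ℕ := #{u ∈ S | G.Adj v u}

/-- The number of darts (oriented edges) from `S` to `T`: it is `e(S, T)` when `S` and `T` are
disjoint, and `2 e(S)` when `S = T`. It is real-valued because it is compared with real bounds. -/
def dartCount (S T : Finset α) : ℝ := #(G.interedges S T)

lemma dartCount_eq_sum_degIn (S T : Finset α) :
    dartCount G S T = ∑ v ∈ S, (degIn G T v : ℝ) := by
  simp only [dartCount, degIn, SimpleGraph.interedges_def, card_filter, sum_product, Nat.cast_sum]

lemma dartCount_comm (S T : Finset α) : dartCount G S T = dartCount G T S :=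
  have := G.symm
  congrArg _ (Rel.card_interedges_comm S T)

lemma degIn_mono (v : α) {S T : Finset α} (h : S ⊆ T) : degIn G S v ≤ degIn G T v :=
  card_le_card (filter_subset_filter _ h)

lemma dartCount_mono_right (S : Finset α) {T U : Finset α} (h : T ⊆ U) :
    dartCount G S T ≤ dartCount G S U :=
  Nat.cast_le.2 (card_le_card (G.interedges_mono Subset.rfl h))

lemma degIn_univ [Fintype α] (v : α) : degIn G univ v = G.degree v := by
  rw [degIn, ← G.neighborFinset_eq_filter, G.card_neighborFinset_eq_degree]

lemma dartCount_univ_right [Fintype α] (S : Finset α) :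
    dartCount G S univ = ∑ v ∈ S, (G.degree v : ℝ) := by
  simp only [dartCount_eq_sum_degIn, degIn_univ]

lemma dartCount_univ_univ [Fintype α] : dartCount G univ univ = 2 * #G.edgeFinset := by
  rw [dartCount_univ_right]
  exact_mod_cast G.sum_degrees_eq_twice_card_edges

lemma degIn_erase_self [DecidableEq α] (S : Finset α) (v : α) :
    degIn G (S.erase v) v = degIn G S v := by
  simp [degIn, filter_erase]

lemma degIn_lt_card {S : Finset α} {v : α} (hv : v ∈ S) : degIn G S v < #S :=
  card_lt_card (filter_ssubset.2 ⟨v, hv, G.irrefl⟩)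

lemma dartCount_self_le (S : Finset α) : dartCount G S S ≤ #S * ((#S : ℝ) - 1) := by
  rw [dartCount_eq_sum_degIn, ← nsmul_eq_mul]
  refine sum_le_card_nsmul _ _ _ fun v hv ↦ le_sub_iff_add_le.2 ?_
  exact_mod_cast degIn_lt_card G hv

lemma dartCount_sdiff_left [DecidableEq α] {W S : Finset α} (h : W ⊆ S) (T : Finset α) :
    dartCount G (S \ W) T = dartCount G S T - dartCount G W T := by
  simp only [dartCount_eq_sum_degIn, ← sum_sdiff h, add_sub_cancel_right]

lemma dartCount_sdiff_self [DecidableEq α] {W S : Finset α} (h : W ⊆ S) :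
    dartCount G (S \ W) (S \ W) =
      dartCount G S S - 2 * dartCount G W S + dartCount G W W := by
  rw [dartCount_sdiff_left G h, dartCount_comm G S, dartCount_comm G W (S \ W),
    dartCount_sdiff_left G h, dartCount_sdiff_left G h, dartCount_comm G S W]
  ring

lemma dartCount_erase_self [DecidableEq α] {S : Finset α} {v : α} (hv : v ∈ S) :
    dartCount G (S.erase v) (S.erase v) = dartCount G S S - 2 * degIn G S v := by
  rw [erase_eq, dartCount_sdiff_self G (singleton_subset_iff.2 hv)]
  simp [dartCount_eq_sum_degIn, degIn, filter_singleton]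

lemma dartCount_insert_self [DecidableEq α] {S : Finset α} {v : α} (hv : v ∉ S) :
    dartCount G (insert v S) (insert v S) = dartCount G S S + 2 * degIn G S v := by
  have h := dartCount_erase_self G (mem_insert_self v S)
  rw [← degIn_erase_self, erase_insert hv] at h
  linarith

lemma two_mul_dartCount_sub_le {W S : Finset α} (h : W ⊆ S) :
    2 * dartCount G W S - dartCount G W W ≤ dartCount G S S := by
  classical
  have hnonneg : 0 ≤ dartCount G (S \ W) (S \ W) := Nat.cast_nonneg _
  linarith [dartCount_sdiff_self G h, hnonneg]

end Darts

section Critical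

variable {α : Type*} {G : SimpleGraph α} [DecidableRel G.Adj]
  {S W : Finset α} {x : ℝ}

/-- `W` arises from a minimal subset of `S` with more than `x * (x + 1)` internal darts by removing
a vertex of minimum degree; the fields record what this gives. Such a `W` becomes a part of
the new partition when `S` is a part with too many edges. -/
structure IsCritical (G : SimpleGraph α) [DecidableRel G.Adj] (S W : Finset α) (x : ℝ) :
    Prop where
  subset : W ⊆ S
  internal_le : dartCount G W W ≤ x * (x + 1)
  lt_two_mul_sub : x * (x + 1) < 2 * dartCount G W S - dartCount G W W
  sq_le : x ^ 2 ≤ dartCount G W S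
  internal_add_one_le : dartCount G W W + 1 ≤ dartCount G W S
  lt_card : x < #W
  degIn_pos : ∀ v ∈ W, 0 < degIn G S v

lemma sq_le_dartCount_sub_of_forall_degIn_le {U : Finset α} {v : α} (hx : 0 ≤ x) (hv : v ∈ U)
    (hU : x * (x + 1) < dartCount G U U) (hmin : ∀ u ∈ U, degIn G U v ≤ degIn G U u) :
    x ^ 2 ≤ dartCount G U U - degIn G U v := by
  rcases le_total (degIn G U v : ℝ) x with hle | hge
  · linarith
  · have hcard : (degIn G U v : ℝ) + 1 ≤ #U := mod_cast degIn_lt_card G hv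
    have hsum : (#U : ℝ) * degIn G U v ≤ dartCount G U U := by
      rw [dartCount_eq_sum_degIn, ← nsmul_eq_mul]
      exact card_nsmul_le_sum _ _ _ fun u hu ↦ mod_cast hmin u hu
    nlinarith

lemma exists_isCritical (hx : 0 ≤ x) (hS : x * (x + 1) < dartCount G S S) :
    ∃ W, IsCritical G S W x := by
  classical
  obtain ⟨U, hUS, hU⟩ := exists_minimal_le_of_wellFoundedLT
    (fun U : Finset α ↦ x * (x + 1) < dartCount G U U) S hS
  have hUlarge : x * (x + 1) < dartCount G U U := hU.prop
  have hUne : U.Nonempty := by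
    rw [nonempty_iff_ne_empty]
    rintro rfl
    exact hUlarge.not_ge (by simpa [dartCount] using by positivity)
  obtain ⟨v, hv, hmin⟩ := exists_min_image U (degIn G U) hUne
  have hinternal : dartCount G (U.erase v) (U.erase v) ≤ x * (x + 1) :=
    not_lt.1 (hU.not_prop_of_lt (erase_ssubset hv))
  have herase := dartCount_erase_self G hv
  have hδ : 0 < degIn G U v := by
    rw [← Nat.cast_pos (α := ℝ)]
    linarith
  have hδ' : (1 : ℝ) ≤ degIn G U v := mod_cast hδ
  have hout : dartCount G U U - degIn G U v ≤ dartCount G (U.erase v) S := by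
    refine le_trans (le_of_eq ?_) (dartCount_mono_right G _ hUS)
    simp [dartCount_eq_sum_degIn, sum_erase_eq_sub hv]
  refine ⟨U.erase v, (erase_subset v U).trans hUS, hinternal, by linarith,
    (sq_le_dartCount_sub_of_forall_degIn_le hx hv hUlarge hmin).trans hout, by linarith, ?_, ?_⟩
  · have hcard : (#(U.erase v) : ℝ) + 1 = #U := mod_cast card_erase_add_one hv
    nlinarith [dartCount_self_le G U]
  · intro u hu
    exact hδ.trans_le ((hmin u (mem_of_mem_erase hu)).trans (degIn_mono G u hUS))

/-- If `#W < x + 1`, counting the darts of `W` in two ways contradicts `x < #W`. -/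
lemma IsCritical.add_one_le_two_mul_sub_of_forall_le_degIn (hW : IsCritical G S W x) (hx : 0 ≤ x)
    (hdeg : ∀ v ∈ W, x + 3 / 4 * (dartCount G S S - x * (x + 1)) ≤ degIn G S v) :
    x * (x + 1) + 1 ≤ 2 * dartCount G W S - dartCount G W W := by
  set excess := dartCount G S S - x * (x + 1)
  have hle := two_mul_dartCount_sub_le G hW.subset
  have hlt := hW.lt_two_mul_sub
  have hexcess_pos : 0 < excess := by linarith
  have hsum : #W * (x + 3 / 4 * excess) ≤ dartCount G W S := by
    rw [dartCount_eq_sum_degIn, ← nsmul_eq_mul]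
    exact card_nsmul_le_sum _ _ _ hdeg
  have hcard : x + 1 ≤ #W := by
    by_contra! hcard
    have hone : (1 : ℝ) ≤ #W := by
      exact_mod_cast Nat.cast_pos.1 (hx.trans_lt hW.lt_card)
    have hgap : 0 < (#W - x) * (x + 1 - #W) :=
      mul_pos (sub_pos.2 hW.lt_card) (sub_pos.2 hcard)
    nlinarith [dartCount_self_le G W, mul_nonneg (sub_nonneg.2 hone) hexcess_pos.le]
  nlinarith [hW.internal_add_one_le]

end Critical

section Part

variable {α κ : Type*} [Fintype α] [DecidableEq κ]

/-- The part of the partition coded by `c : α → κ` with index `i`. -/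
def part (c : α → κ) (i : κ) : Finset α := {v | c v = i}

@[simp]
lemma mem_part {c : α → κ} {i : κ} {v : α} : v ∈ part c i ↔ c v = i := by
  simp [part]

lemma isKPartition_part {k : ℕ} (c : α → Fin k) : IsKPartition (part c) := by
  refine ⟨fun i j hij ↦ disjoint_left.2 fun v hi hj ↦ hij ?_, fun v ↦ ⟨c v, mem_part.2 rfl⟩⟩
  rw [← mem_part.1 hi, mem_part.1 hj]

lemma part_update_of_ne [DecidableEq α] {c : α → κ} {v : α} {i j : κ} (hij : i ≠ j) :
    part (Function.update c v j) i = (part c i).erase v := by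
  ext u
  obtain rfl | huv := eq_or_ne u v <;> simp [*, hij.symm]

lemma part_update_self [DecidableEq α] (c : α → κ) (v : α) (j : κ) :
    part (Function.update c v j) j = insert v (part c j) := by
  ext u
  obtain rfl | huv := eq_or_ne u v <;> simp [*]

variable [Fintype κ] (G : SimpleGraph α) [DecidableRel G.Adj]

/-- The number of darts inside the parts of `c`: twice the number of edges that do not cross. -/
def monoDartCount (c : α → κ) : ℝ := ∑ i, dartCount G (part c i) (part c i)

lemma sum_degIn_part (c : α → κ) (v : α) : ∑ i, degIn G (part c i) v = G.degree v := by
  rw [← degIn_univ, degIn, card_eq_sum_card_fiberwise (f := c) (t := univ) (by simp)]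
  refine sum_congr rfl fun i _ ↦ congrArg card ?_
  ext u
  simp [and_comm]

lemma sum_dartCount_part_left (c : α → κ) (S : Finset α) :
    ∑ i, dartCount G (part c i) S = dartCount G univ S := by
  simp only [dartCount_eq_sum_degIn]
  exact sum_fiberwise univ c _

lemma sum_dartCount_part_right (c : α → κ) (S : Finset α) :
    ∑ i, dartCount G S (part c i) = dartCount G S univ := by
  simp only [dartCount_comm G S, sum_dartCount_part_left]

lemma monoDartCount_eq_sum (c : α → κ) :
    monoDartCount G c = ∑ p ∈ G.interedges univ univ, if c p.1 = c p.2 then 1 else 0 := by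
  rw [← sum_filter, sum_const, nsmul_one,
    card_eq_sum_card_fiberwise (f := fun p ↦ c p.1) (t := univ) (by simp), Nat.cast_sum]
  refine sum_congr rfl fun i _ ↦ congrArg (fun A : Finset (α × α) ↦ (#A : ℝ)) ?_
  ext ⟨u, v⟩
  simp only [SimpleGraph.mem_interedges_iff, mem_part, mem_filter, mem_univ, true_and]
  exact ⟨fun ⟨hu, hv, huv⟩ ↦ ⟨⟨huv, hu.trans hv.symm⟩, hu⟩,
    fun ⟨⟨huv, hc⟩, hu⟩ ↦ ⟨hu, hc ▸ hu, huv⟩⟩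

lemma exists_ne_mul_dartCount_part_le [Nontrivial κ] (c : α → κ) (i : κ) :
    ∃ j ≠ i, ((Fintype.card κ : ℝ) - 1) * dartCount G (part c j) (part c j) ≤
      monoDartCount G c - dartCount G (part c i) (part c i) := by
  have hne : (univ.erase i).Nonempty := univ_nontrivial.erase_nonempty
  obtain ⟨j, hj, hmin⟩ := exists_min_image (univ.erase i)
    (fun j ↦ dartCount G (part c j) (part c j)) hne
  refine ⟨j, ne_of_mem_erase hj, ?_⟩
  have hsum := card_nsmul_le_sum _ _ _ hmin
  rwa [card_erase_of_mem (mem_univ i), card_univ, nsmul_eq_mul,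
    Nat.cast_pred Fintype.card_pos, sum_erase_eq_sub (mem_univ i)] at hsum

end Part

section EdgeCount

variable {α : Type*} [Fintype α] [DecidableEq α] (G : SimpleGraph α) [DecidableRel G.Adj]

lemma eCross_eq_dartCount (S T : Finset α) : (eCross G S T : ℝ) = dartCount G S T := by
  refine congrArg (fun A : Finset (α × α) ↦ (#A : ℝ)) ?_
  ext p
  simp [SimpleGraph.mem_interedges_iff, and_comm, and_assoc]

lemma eIn_le_dartCount_div_two (S : Finset α) : (eIn G S : ℝ) ≤ dartCount G S S / 2 := by
  rw [← eCross_eq_dartCount]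
  exact Nat.cast_div_le

lemma monoDartCount_add_two_mul_crossTotal {k : ℕ} (c : α → Fin k) :
    monoDartCount G c + 2 * crossTotal G (part c) = dartCount G univ univ := by
  have hcross : (crossTotal G (part c) : ℝ) =
      ∑ i, ∑ j, if i < j then dartCount G (part c i) (part c j) else 0 := by
    simp [crossTotal, eCross_eq_dartCount]
  have hcross' : (crossTotal G (part c) : ℝ) =
      ∑ i, ∑ j, if j < i then dartCount G (part c i) (part c j) else 0 := by
    rw [hcross, sum_comm]
    exact sum_congr rfl fun i _ ↦ sum_congr rfl fun j _ ↦ by rw [dartCount_comm]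
  have hmono : monoDartCount G c =
      ∑ i, ∑ j, if i = j then dartCount G (part c i) (part c j) else 0 := by
    simp [monoDartCount]
  rw [two_mul]
  nth_rw 1 [hcross]
  rw [hcross', hmono, ← sum_dartCount_part_left G c]
  simp only [← sum_dartCount_part_right G c, ← sum_add_distrib]
  refine sum_congr rfl fun i _ ↦ sum_congr rfl fun j _ ↦ ?_
  obtain hij | rfl | hij := lt_trichotomy i j
  · simp [hij, hij.ne, hij.not_gt]
  · simp
  · simp [hij, hij.ne', hij.not_gt]

end EdgeCount

section Moving

variable {α κ : Type*} [Fintype α] [Fintype κ] [DecidableEq κ] {G : SimpleGraph α}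
  [DecidableRel G.Adj] {c : α → κ}

lemma sum_dartCount_part_update [DecidableEq α] (f : ℝ → ℝ) {v : α} {j : κ} (hj : c v ≠ j) :
    ∑ i, f (dartCount G (part (Function.update c v j) i) (part (Function.update c v j) i)) =
      ∑ i, f (dartCount G (part c i) (part c i)) +
        (f (dartCount G (part c (c v)) (part c (c v)) - 2 * degIn G (part c (c v)) v) -
          f (dartCount G (part c (c v)) (part c (c v)))) +
        (f (dartCount G (part c j) (part c j) + 2 * degIn G (part c j) v) -
          f (dartCount G (part c j) (part c j))) := by
  have hfixed : ∀ i, i ≠ c v ∧ i ≠ j →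
      f (dartCount G (part (Function.update c v j) i) (part (Function.update c v j) i)) -
        f (dartCount G (part c i) (part c i)) = 0 := by
    rintro i ⟨hi, hij⟩
    rw [part_update_of_ne hij, erase_eq_of_notMem (by simpa using hi.symm), sub_self]
  have hsum := Fintype.sum_eq_add (c v) j hj hfixed
  rw [sum_sub_distrib, part_update_of_ne hj, part_update_self,
    dartCount_erase_self G (mem_part.2 rfl), dartCount_insert_self G (by simpa using hj)] at hsum
  linarith

variable (G) in
/-- The cost of a partition: first the number of darts inside the parts, then, as a measure of
how unevenly they are distributed, the sum of the squares of their numbers. -/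
def lexCost (c : α → κ) : ℝ ×ₗ ℝ :=
  toLex (monoDartCount G c, ∑ i, dartCount G (part c i) (part c i) ^ 2)

variable (G c) in
/-- The partition coded by `c` has as few darts inside its parts as possible and, among all such
partitions, distributes them as evenly as possible. -/
def IsLexMinimal : Prop := ∀ c' : α → κ, lexCost G c ≤ lexCost G c'

variable (G κ) in
lemma exists_isLexMinimal [Nonempty κ] : ∃ c : α → κ, IsLexMinimal G c :=
  Finite.exists_min (lexCost G)

lemma IsLexMinimal.monoDartCount_le (hc : IsLexMinimal G c) (c' : α → κ) :
    monoDartCount G c ≤ monoDartCount G c' := by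
  rcases Prod.Lex.toLex_le_toLex.1 (hc c') with hlt | ⟨heq, -⟩
  exacts [hlt.le, heq.le]

lemma IsLexMinimal.degIn_part_le (hc : IsLexMinimal G c) (v : α) (j : κ) :
    degIn G (part c (c v)) v ≤ degIn G (part c j) v := by
  classical
  obtain rfl | hj := eq_or_ne (c v) j
  · rfl
  have hmove := sum_dartCount_part_update (G := G) id hj
  have hmin := hc.monoDartCount_le (Function.update c v j)
  simp only [id_eq] at hmove
  rw [monoDartCount, monoDartCount, hmove] at hmin
  rw [← Nat.cast_le (α := ℝ)]
  linarith

lemma IsLexMinimal.degIn_part_lt (hc : IsLexMinimal G c) {v : α}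
    {j : κ} (hpos : 0 < degIn G (part c (c v)) v)
    (hlt : 2 * (degIn G (part c (c v)) v : ℝ) <
      dartCount G (part c (c v)) (part c (c v)) - dartCount G (part c j) (part c j)) :
    degIn G (part c (c v)) v < degIn G (part c j) v := by
  classical
  have hj : c v ≠ j := by
    rintro rfl
    linarith [(Nat.cast_pos (α := ℝ)).2 hpos]
  refine (hc.degIn_part_le v j).lt_of_ne fun heq ↦ ?_
  have hmono : monoDartCount G (Function.update c v j) = monoDartCount G c := by
    have hmove := sum_dartCount_part_update (G := G) id hj
    simp only [id_eq, ← heq] at hmove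
    rw [monoDartCount, monoDartCount, hmove]
    ring
  have hsq := sum_dartCount_part_update (G := G) (· ^ 2) hj
  rcases Prod.Lex.toLex_le_toLex.1 (hc (Function.update c v j)) with hmin | ⟨-, hmin⟩
  · exact hmin.ne hmono.symm
  · simp only [← heq] at hsq hmin
    rw [hsq] at hmin
    have hpos' : (0 : ℝ) < degIn G (part c (c v)) v := mod_cast hpos
    nlinarith [mul_pos hpos' (sub_pos.2 hlt)]

lemma IsLexMinimal.card_mul_degIn_part_le_degree (hc : IsLexMinimal G c) (v : α) :
    Fintype.card κ * degIn G (part c (c v)) v ≤ G.degree v := by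
  rw [← sum_degIn_part G c v, ← smul_eq_mul, ← card_univ]
  exact card_nsmul_le_sum _ _ _ fun j _ ↦ hc.degIn_part_le v j

lemma IsLexMinimal.card_mul_degIn_part_lt_degree (hc : IsLexMinimal G c) {v : α} {j : κ}
    (hj : degIn G (part c (c v)) v < degIn G (part c j) v) :
    Fintype.card κ * degIn G (part c (c v)) v < G.degree v := by
  rw [← sum_degIn_part G c v, ← smul_eq_mul, ← card_univ, ← sum_const]
  exact sum_lt_sum (fun j _ ↦ hc.degIn_part_le v j) ⟨j, mem_univ j, hj⟩

variable {W : Finset α} {i : κ}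

lemma IsLexMinimal.card_mul_dartCount_part_le (hc : IsLexMinimal G c) (hW : W ⊆ part c i) :
    Fintype.card κ * dartCount G W (part c i) ≤ dartCount G W univ := by
  rw [dartCount_eq_sum_degIn, dartCount_univ_right, mul_sum]
  refine sum_le_sum fun v hv ↦ ?_
  obtain rfl := mem_part.1 (hW hv)
  exact_mod_cast hc.card_mul_degIn_part_le_degree v

lemma IsLexMinimal.card_mul_dartCount_part_add_one_le (hc : IsLexMinimal G c)
    (hW : W ⊆ part c i) {v : α} (hv : v ∈ W) {j : κ}
    (hj : degIn G (part c i) v < degIn G (part c j) v) :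
    Fintype.card κ * dartCount G W (part c i) + 1 ≤ dartCount G W univ := by
  have hsum : ∑ u ∈ W, Fintype.card κ * degIn G (part c i) u < ∑ u ∈ W, G.degree u := by
    refine sum_lt_sum (fun u hu ↦ ?_) ⟨v, hv, ?_⟩
    · obtain rfl := mem_part.1 (hW hu)
      exact hc.card_mul_degIn_part_le_degree u
    · obtain rfl := mem_part.1 (hW hv)
      exact hc.card_mul_degIn_part_lt_degree hj
  rw [dartCount_eq_sum_degIn, dartCount_univ_right, mul_sum]
  exact_mod_cast hsum

end Moving

section Split

/-- The graph obtained from `G` by deleting all edges that meet `W`. Its vertices are those of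
`G`, so that its partitions have the same type. -/
def isolate {α : Type*} (G : SimpleGraph α) (W : Finset α) : SimpleGraph α where
  Adj u v := G.Adj u v ∧ u ∉ W ∧ v ∉ W
  symm := ⟨fun _ _ ⟨huv, hu, hv⟩ ↦ ⟨huv.symm, hv, hu⟩⟩
  loopless := ⟨fun _ h ↦ G.irrefl h.1⟩

lemma isolate_adj {α : Type*} {G : SimpleGraph α} {W : Finset α} {u v : α} :
    (isolate G W).Adj u v ↔ G.Adj u v ∧ u ∉ W ∧ v ∉ W := Iff.rfl

variable {α : Type*} [DecidableEq α] (G : SimpleGraph α) [DecidableRel G.Adj] (W : Finset α)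

instance : DecidableRel (isolate G W).Adj :=
  fun _ _ ↦ decidable_of_iff' _ isolate_adj

lemma dartCount_isolate (S T : Finset α) :
    dartCount (isolate G W) S T = dartCount G (S \ W) (T \ W) := by
  refine congrArg (fun A : Finset (α × α) ↦ (#A : ℝ)) ?_
  ext ⟨u, v⟩
  simp only [SimpleGraph.mem_interedges_iff, isolate_adj, mem_sdiff]
  tauto

/-- The partition into `W` and the parts of `c` with `W` removed. -/
def consPart {k : ℕ} (c : α → Fin k) (v : α) : Fin (k + 1) := if v ∈ W then 0 else (c v).succ

variable [Fintype α] {W} {k : ℕ} (c : α → Fin k)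

lemma part_consPart_zero : part (consPart W c) 0 = W := by
  ext v
  simp [consPart]

lemma part_consPart_succ (i : Fin k) : part (consPart W c) i.succ = part c i \ W := by
  ext v
  by_cases hv : v ∈ W <;> simp [consPart, hv, (Fin.succ_ne_zero i).symm]

lemma dartCount_part_consPart_succ (i : Fin k) :
    dartCount G (part (consPart W c) i.succ) (part (consPart W c) i.succ) =
      dartCount (isolate G W) (part c i) (part c i) := by
  rw [dartCount_isolate, part_consPart_succ]

lemma monoDartCount_consPart :
    monoDartCount G (consPart W c) = dartCount G W W + monoDartCount (isolate G W) c := by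
  simp only [monoDartCount, Fin.sum_univ_succ, part_consPart_zero, dartCount_part_consPart_succ]

lemma dartCount_part_consPart_le {b : ℝ} (hW : dartCount G W W ≤ b)
    (hc : ∀ i, dartCount (isolate G W) (part c i) (part c i) ≤ b) (i : Fin (k + 1)) :
    dartCount G (part (consPart W c) i) (part (consPart W c) i) ≤ b := by
  cases i using Fin.cases with
  | zero => rwa [part_consPart_zero]
  | succ i => rw [dartCount_part_consPart_succ]; exact hc i

variable (W) in
lemma dartCount_isolate_univ :
    dartCount (isolate G W) univ univ =
      dartCount G univ univ - 2 * dartCount G W univ + dartCount G W W := by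
  rw [dartCount_isolate, dartCount_sdiff_self G (subset_univ W)]

end Split

section Edwards

variable {α β κ : Type*} {G : SimpleGraph α}

open SimpleGraph in
lemma exists_adj_of_card_le_chromaticNumber [Fintype β]
    (hβ : (Fintype.card β : ℕ∞) ≤ G.chromaticNumber) (C : G.Coloring β) {i j : β} (hij : i ≠ j) :
    ∃ u v, G.Adj u v ∧ C u = i ∧ C v = j := by
  classical
  by_contra! hnone
  let merged : G.Coloring β := Coloring.mk (fun v ↦ if C v = j then i else C v) fun {u v} huv ↦ by
    have hCuv := C.valid huv
    have hnone_uv := hnone u v huv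
    have hnone_vu := hnone v u huv.symm
    split_ifs <;> grind
  obtain ⟨v, hv⟩ := card_le_chromaticNumber_iff_forall_surjective.1 hβ merged j
  change (if C v = j then i else C v) = j at hv
  split_ifs at hv with hCv
  exacts [hij hv, hCv hv]

variable [Fintype α] [DecidableRel G.Adj]

variable (G) in
open SimpleGraph in
lemma exists_coloring_mul_sub_one_le_dartCount :
    ∃ n, ∃ _ : G.Coloring (Fin n), (n : ℝ) * (n - 1) ≤ dartCount G univ univ := by
  have hfin : G.chromaticNumber ≠ ⊤ :=
    chromaticNumber_ne_top_iff_exists.2 ⟨_, G.colorable_of_fintype⟩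
  obtain ⟨C⟩ := G.colorable_chromaticNumber_of_fintype
  refine ⟨_, C, ?_⟩
  have hsub : (univ : Finset (Fin G.chromaticNumber.toNat)).offDiag ⊆
      (G.interedges univ univ).image (Prod.map C C) := by
    rintro ⟨i, j⟩ hij
    obtain ⟨u, v, huv, rfl, rfl⟩ := exists_adj_of_card_le_chromaticNumber
      (by rw [Fintype.card_fin, ENat.natCast_toNat hfin]) C (mem_offDiag.1 hij).2.2
    exact mem_image.2 ⟨(u, v), (mk_mem_interedges_iff G).2 ⟨mem_univ u, mem_univ v, huv⟩, rfl⟩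
  have hcard := (card_le_card hsub).trans card_image_le
  rw [offDiag_card, card_fin] at hcard
  have hcast : (#(G.interedges univ univ) : ℝ) = dartCount G univ univ := rfl
  rw [mul_sub_one, ← hcast, sub_le_iff_le_add]
  exact_mod_cast Nat.sub_le_iff_le_add.1 hcard

lemma card_offDiag_nsmul_sum_perm [Fintype β] [DecidableEq β] {M : Type*} [AddCommMonoid M]
    (F : β × β → M) {a b : β} (hab : a ≠ b) :
    #(univ : Finset β).offDiag • ∑ σ : Equiv.Perm β, F (σ a, σ b) =
      Fintype.card (Equiv.Perm β) • ∑ q ∈ univ.offDiag, F q := by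
  have hpair : ∀ q ∈ (univ : Finset β).offDiag,
      ∑ σ : Equiv.Perm β, F (σ q.1, σ q.2) = ∑ σ : Equiv.Perm β, F (σ a, σ b) := by
    rintro ⟨c, d⟩ hcd
    obtain ⟨τ, rfl, rfl⟩ := MulAction.is_two_pretransitive_iff.1
      (Equiv.Perm.isMultiplyPretransitive β 2) hab (mem_offDiag.1 hcd).2.2
    exact Fintype.sum_equiv (Equiv.mulRight τ) _ _ fun σ ↦ rfl
  have hperm : ∀ σ : Equiv.Perm β,
      ∑ q ∈ univ.offDiag, F (σ q.1, σ q.2) = ∑ q ∈ univ.offDiag, F q := fun σ ↦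
    sum_equiv (Equiv.prodCongr σ σ) (by simp) fun _ _ ↦ rfl
  rw [← sum_const, ← sum_congr rfl hpair, sum_comm, sum_congr rfl fun σ _ ↦ hperm σ, sum_const,
    card_univ]

/-- Average over all permutations of the colors. -/
lemma exists_monoDartCount_mul_le [Fintype β] [Fintype κ] [DecidableEq κ]
    (C : G.Coloring β) (f : β → κ) :
    ∃ c : α → κ, monoDartCount G c * #(univ : Finset β).offDiag ≤
      dartCount G univ univ * #{q ∈ (univ : Finset β).offDiag | f q.1 = f q.2} := by
  classical
  let F (q : β × β) : ℝ := if f q.1 = f q.2 then 1 else 0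
  have hdart : ∀ p ∈ G.interedges univ univ,
      (∑ σ : Equiv.Perm β, F (σ (C p.1), σ (C p.2))) * #(univ : Finset β).offDiag =
        ∑ _σ : Equiv.Perm β, (#{q ∈ (univ : Finset β).offDiag | f q.1 = f q.2} : ℝ) := by
    intro p hp
    have hsum := card_offDiag_nsmul_sum_perm F (C.valid (G.mem_interedges_iff.1 hp).2.2)
    rw [nsmul_eq_mul] at hsum
    rw [mul_comm, hsum, sum_const, card_univ, sum_boole]
  obtain ⟨σ, -, hσ⟩ := exists_le_of_sum_le (univ_nonempty (α := Equiv.Perm β)) (le_of_eq <| calc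
    ∑ σ : Equiv.Perm β, monoDartCount G (f ∘ σ ∘ C) * #(univ : Finset β).offDiag
      = ∑ p ∈ G.interedges univ univ,
          (∑ σ : Equiv.Perm β, F (σ (C p.1), σ (C p.2))) * #(univ : Finset β).offDiag := by
        simp only [monoDartCount_eq_sum, ← sum_mul]
        rw [sum_comm]
        rfl
    _ = ∑ _σ : Equiv.Perm β,
          dartCount G univ univ * #{q ∈ (univ : Finset β).offDiag | f q.1 = f q.2} := by
        rw [sum_congr rfl hdart, sum_const, ← mul_sum, nsmul_eq_mul, dartCount])
  exact ⟨f ∘ σ ∘ C, hσ⟩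

open SimpleGraph in
lemma mul_sq_le_card_edgeFinset_turanGraph {k : ℕ} (hk : k ≤ 2) (n : ℕ) :
    k * n ^ 2 ≤ 2 * (k + 1) * #(turanGraph n (k + 1)).edgeFinset + k := by
  induction n using Nat.strong_induction_on with
  | _ n ih =>
    rcases lt_or_ge n (k + 1) with hn | hn
    · have hcard := card_edgeFinset_top_eq_card_choose_two (V := Fin n)
      rw [Fintype.card_fin, Nat.choose_two_right] at hcard
      have htop : #(turanGraph n (k + 1)).edgeFinset = n * (n - 1) / 2 := by
        rw [← hcard]
        congr!
        exact turanGraph_eq_top.2 (.inr hn.le)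
      rw [htop]
      interval_cases k <;> interval_cases n <;> norm_num
    · obtain ⟨n, rfl⟩ := Nat.exists_eq_add_of_le' hn
      have hchoose : 2 * (k + 1).choose 2 = (k + 1) * k := by
        rw [Nat.choose_two_right, Nat.mul_div_cancel' (Nat.even_mul_pred_self _).two_dvd,
          Nat.add_sub_cancel]
      rw [card_edgeFinset_turanGraph_add, Nat.add_sub_cancel]
      linarith [ih n (by lia), congrArg ((k + 1) * ·) hchoose]

open SimpleGraph in
lemma exists_mul_card_filter_offDiag_le {k : ℕ} (hk : k ≤ 2) (n : ℕ) :
    ∃ f : Fin n → Fin (k + 1), ((k : ℝ) + 1) * #{q ∈ univ.offDiag | f q.1 = f q.2} ≤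
      (n - 1) * (n - k) := by
  let f (p : Fin n) : Fin (k + 1) := Fin.ofNat (k + 1) p
  have hturan : 2 * #(turanGraph n (k + 1)).edgeFinset = #{q ∈ univ.offDiag | f q.1 ≠ f q.2} := by
    rw [← Nat.cast_inj (R := ℝ), Nat.cast_mul, Nat.cast_two, ← dartCount_univ_univ]
    refine congrArg (fun A : Finset (Fin n × Fin n) ↦ (#A : ℝ)) ?_
    ext ⟨i, j⟩
    have himp : i % (k + 1) ≠ j % (k + 1) → i ≠ j := by
      rintro h rfl
      exact h rfl
    simpa [mem_interedges_iff, turanGraph_adj, f, Fin.ofNat, Fin.ext_iff] using himp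
  have hcard := card_filter_add_card_filter_not (s := (univ : Finset (Fin n)).offDiag)
    (fun q ↦ f q.1 = f q.2)
  have hpairs := offDiag_card (univ : Finset (Fin n))
  refine ⟨f, ?_⟩
  rw [← hturan, hpairs, card_fin] at hcard
  have hcard' : (#{q ∈ univ.offDiag | f q.1 = f q.2} : ℝ) +
      2 * #(turanGraph n (k + 1)).edgeFinset = n * n - n := by
    rw [← Nat.cast_mul, ← Nat.cast_sub (Nat.le_mul_self n)]
    exact_mod_cast hcard
  have hlarge : (k : ℝ) * n ^ 2 ≤ 2 * (k + 1) * #(turanGraph n (k + 1)).edgeFinset + k :=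
    mod_cast mul_sq_le_card_edgeFinset_turanGraph hk n
  linarith [congrArg (((k : ℝ) + 1) * ·) hcard']

/-- Edwards' bound on the maximum `(k + 1)`-cut. -/
lemma exists_mul_monoDartCount_le {k : ℕ} (hk : k ≤ 2) {h : ℝ} (hh : 0 ≤ h)
    (hG : dartCount G univ univ = h * (h + 1)) :
    ∃ c : α → Fin (k + 1), (k + 1) * monoDartCount G c ≤ h * (h + 1 - k) := by
  classical
  obtain rfl | hpos := hh.eq_or_lt
  · refine ⟨fun _ ↦ 0, ?_⟩
    have hcut := monoDartCount_add_two_mul_crossTotal G (fun _ ↦ (0 : Fin (k + 1)))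
    have hmono : monoDartCount G (fun _ ↦ (0 : Fin (k + 1))) ≤ 0 := by
      linarith [(crossTotal G (part fun _ ↦ (0 : Fin (k + 1)))).cast_nonneg (α := ℝ)]
    rw [zero_mul]
    exact mul_nonpos_of_nonneg_of_nonpos (by positivity) hmono
  obtain ⟨n, C, hn⟩ := exists_coloring_mul_sub_one_le_dartCount G
  have htwo : (2 : ℝ) ≤ n := by
    have hdart : 0 < dartCount G univ univ := by rw [hG]; positivity
    obtain ⟨p, hp⟩ := card_pos.1 (Nat.cast_pos.1 hdart)
    have := Fin.nontrivial_iff_two_le.1 ⟨_, _, C.valid (G.mem_interedges_iff.1 hp).2.2⟩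
    exact_mod_cast this
  have hle : (n : ℝ) ≤ h + 1 := by nlinarith
  obtain ⟨f, hf⟩ := exists_mul_card_filter_offDiag_le hk n
  obtain ⟨c, hc⟩ := exists_monoDartCount_mul_le C f
  refine ⟨c, ?_⟩
  rw [offDiag_card, card_fin, Nat.cast_sub (Nat.le_mul_self n), Nat.cast_mul, hG] at hc
  have hcancel : (n - 1) * (n * ((k + 1) * monoDartCount G c)) ≤
      ((n : ℝ) - 1) * (h * (h + 1) * (n - k)) := by
    nlinarith [mul_le_mul_of_nonneg_left hf (by positivity : 0 ≤ h * (h + 1))]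
  have hscaled := le_of_mul_le_mul_left hcancel (by linarith)
  refine le_of_mul_le_mul_left (a := (n : ℝ)) (hscaled.trans ?_) (by linarith)
  nlinarith [mul_nonneg hh (mul_nonneg (Nat.cast_nonneg (α := ℝ) k) (sub_nonneg.2 hle))]

end Edwards

section Judicious

lemma hfun_nonneg {x : ℝ} (hx : 0 ≤ x) : 0 ≤ hfun x :=
  sub_nonneg.2 (Real.le_sqrt_of_sq_le (by linarith))

lemma hfun_mul_hfun_add_one {x : ℝ} (hx : 0 ≤ x) : hfun x * (hfun x + 1) = 2 * x := by
  have hsqrt := Real.sq_sqrt (show 0 ≤ 2 * x + 1 / 4 by positivity)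
  unfold hfun
  linarith

variable {α : Type*} [Fintype α] {G : SimpleGraph α} [DecidableRel G.Adj]

lemma exists_isLexMinimal_mul_monoDartCount_le {k : ℕ} (hk : k ≤ 2) {h : ℝ} (hh : 0 ≤ h)
    (hG : dartCount G univ univ = h * (h + 1)) :
    ∃ c : α → Fin (k + 1),
      IsLexMinimal G c ∧ (k + 1) * monoDartCount G c ≤ h * (h + 1 - k) := by
  obtain ⟨c, hc⟩ := exists_isLexMinimal (Fin (k + 1)) G
  obtain ⟨c', hc'⟩ := exists_mul_monoDartCount_le hk hh hG
  exact ⟨c, hc, (mul_le_mul_of_nonneg_left (hc.monoDartCount_le c') (by positivity)).trans hc'⟩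

lemma exists_judicious_bipartition {y : ℝ} (hy : 0 ≤ y)
    (hG : dartCount G univ univ = 2 * y * (2 * y + 1)) :
    ∃ c : α → Fin 2, (∀ i, dartCount G (part c i) (part c i) ≤ y * (y + 1)) ∧
      monoDartCount G c ≤ 2 * y ^ 2 := by
  classical
  obtain ⟨c, hc, hmono⟩ :=
    exists_isLexMinimal_mul_monoDartCount_le one_le_two (by positivity) hG
  rw [Nat.cast_one] at hmono
  by_cases hlight : ∀ i, dartCount G (part c i) (part c i) ≤ y * (y + 1)
  · exact ⟨c, hlight, by linarith⟩
  push Not at hlight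
  obtain ⟨i, hi⟩ := hlight
  obtain ⟨W, hW⟩ := exists_isCritical hy hi
  have hsum := hc.card_mul_dartCount_part_le hW.subset
  rw [Fintype.card_fin, Nat.cast_add, Nat.cast_one] at hsum
  have hrest := dartCount_isolate_univ G W
  have hlt := hW.lt_two_mul_sub
  have hsq := hW.sq_le
  have hall : ∀ j : Fin 1, part (fun _ : α ↦ (0 : Fin 1)) j = univ := fun j ↦ by
    ext v
    simp [Subsingleton.elim 0 j]
  refine ⟨consPart W fun _ ↦ (0 : Fin 1),
    dartCount_part_consPart_le G _ hW.internal_le fun j ↦ ?_, ?_⟩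
  · rw [hall]
    linarith
  · rw [monoDartCount_consPart, monoDartCount, Fin.sum_univ_one, hall]
    linarith

variable {x : ℝ} {c : α → Fin 3} {i : Fin 3} {W : Finset α}

/-- If neither alternative holds, then some vertex of `W` could be moved to the part with the
fewest edges at no cost in crossing edges, and this would make the partition more even. -/
lemma IsLexMinimal.three_mul_add_one_le_or_add_one_le (hc : IsLexMinimal G c) (hx : 0 ≤ x)
    (hmono : monoDartCount G c ≤ x * (3 * x - 1)) (hW : IsCritical G (part c i) W x) :
    3 * dartCount G W (part c i) + 1 ≤ dartCount G W univ ∨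
      x * (x + 1) + 1 ≤ 2 * dartCount G W (part c i) - dartCount G W W := by
  by_cases hdeg : ∀ v ∈ W,
      x + 3 / 4 * (dartCount G (part c i) (part c i) - x * (x + 1)) ≤ degIn G (part c i) v
  · exact .inr (hW.add_one_le_two_mul_sub_of_forall_le_degIn hx hdeg)
  push Not at hdeg
  obtain ⟨v, hv, hlow⟩ := hdeg
  obtain ⟨j, -, hj⟩ := exists_ne_mul_dartCount_part_le G c i
  have hgap : 2 * (degIn G (part c i) v : ℝ) <
      dartCount G (part c i) (part c i) - dartCount G (part c j) (part c j) := by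
    rw [Fintype.card_fin, Nat.cast_ofNat] at hj
    linarith
  have hmore : degIn G (part c i) v < degIn G (part c j) v := by
    obtain rfl := mem_part.1 (hW.subset hv)
    exact hc.degIn_part_lt (hW.degIn_pos v hv) hgap
  have hsum := hc.card_mul_dartCount_part_add_one_le hW.subset hv hmore
  rw [Fintype.card_fin, Nat.cast_ofNat] at hsum
  exact .inl hsum

lemma add_two_mul_sq_le {a y : ℝ} (hx : 0 ≤ x) (hy : 0 ≤ y) (ha : a ≤ x * (x + 1))
    (hay : 2 * y * (2 * y + 1) ≤ 6 * x ^ 2 - 2 * a - 2) :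
    a + 2 * y ^ 2 ≤ x * (3 * x - 1) := by
  rcases le_total (x - 1) y with hxy | hxy
  · linarith
  · nlinarith

lemma IsCritical.exists_judicious_tripartition
    (hW : IsCritical G (part c i) W x) (hx : 0 ≤ x) (hc : IsLexMinimal G c)
    (hmono : monoDartCount G c ≤ x * (3 * x - 1))
    (hG : dartCount G univ univ = 3 * x * (3 * x + 1)) :
    ∃ c : α → Fin 3, (∀ i, dartCount G (part c i) (part c i) ≤ x * (x + 1)) ∧
      monoDartCount G c ≤ x * (3 * x - 1) := by
  classical
  have hrest := dartCount_isolate_univ G W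
  have hlt := hW.lt_two_mul_sub
  have hsum := hc.card_mul_dartCount_part_le hW.subset
  rw [Fintype.card_fin, Nat.cast_ofNat] at hsum
  set rest := dartCount (isolate G W) univ univ
  have hrest_le : rest ≤ 2 * x * (2 * x + 1) := by linarith [hW.sq_le]
  have hrest_le' : rest ≤ 6 * x ^ 2 - 2 * dartCount G W W - 2 := by
    rcases hc.three_mul_add_one_le_or_add_one_le hx hmono hW with h | h <;> linarith
  have hrest_nonneg : 0 ≤ rest / 2 := by
    simp only [rest, dartCount]
    positivity
  obtain ⟨y, hy, hrest_eq⟩ : ∃ y, 0 ≤ y ∧ rest = 2 * y * (2 * y + 1) :=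
    ⟨hfun (rest / 2) / 2, div_nonneg (hfun_nonneg hrest_nonneg) two_pos.le,
      by linarith [hfun_mul_hfun_add_one hrest_nonneg]⟩
  rw [hrest_eq] at hrest_le hrest_le'
  have hyx : y ≤ x := by nlinarith
  obtain ⟨d, hd, hd_mono⟩ := exists_judicious_bipartition hy hrest_eq
  refine ⟨consPart W d, dartCount_part_consPart_le G d hW.internal_le fun j ↦ ?_, ?_⟩
  · exact (hd j).trans (by gcongr)
  · rw [monoDartCount_consPart]
    linarith [add_two_mul_sq_le hx hy hW.internal_le hrest_le']

lemma exists_judicious_tripartition (hx : 0 ≤ x)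
    (hG : dartCount G univ univ = 3 * x * (3 * x + 1)) :
    ∃ c : α → Fin 3, (∀ i, dartCount G (part c i) (part c i) ≤ x * (x + 1)) ∧
      monoDartCount G c ≤ x * (3 * x - 1) := by
  classical
  obtain ⟨c, hc, hmono⟩ :=
    exists_isLexMinimal_mul_monoDartCount_le le_rfl (by positivity) hG
  replace hmono : monoDartCount G c ≤ x * (3 * x - 1) := by
    rw [Nat.cast_ofNat] at hmono
    linarith
  by_cases hlight : ∀ i, dartCount G (part c i) (part c i) ≤ x * (x + 1)
  · exact ⟨c, hlight, hmono⟩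
  push Not at hlight
  obtain ⟨i, hi⟩ := hlight
  obtain ⟨W, hW⟩ := exists_isCritical hx hi
  exact hW.exists_judicious_tripartition hx hc hmono hG

end Judicious

/-- Every graph with `m` edges admits a 3-partition `(V₁,V₂,V₃)` with
`max eᵢ(Vᵢ) ≤ m/9 + h(m)/9` and `e(V₁,V₂,V₃) ≥ (2/3)m + (1/3)h(m)`. -/
theorem stmt_2 {V : Type*} [Fintype V] [DecidableEq V]
    (G : SimpleGraph V) [DecidableRel G.Adj] (m : ℕ) (hm : m = G.edgeFinset.card) :
    ∃ P : Fin 3 → Finset V, IsKPartition P ∧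
      (∀ i : Fin 3, (eIn G (P i) : ℝ) ≤ (m : ℝ) / 9 + (1 / 9) * hfun m) ∧
      (2 / 3 : ℝ) * m + (1 / 3) * hfun m ≤ (crossTotal G P : ℝ) := by
  have hh := hfun_mul_hfun_add_one (m.cast_nonneg (α := ℝ))
  have hdarts : dartCount G univ univ = 2 * m := by rw [dartCount_univ_univ, hm]
  obtain ⟨c, hparts, hmono⟩ := exists_judicious_tripartition (G := G) (x := hfun m / 3)
    (div_nonneg (hfun_nonneg m.cast_nonneg) zero_le_three) (by linarith)
  refine ⟨part c, isKPartition_part c, fun i ↦ ?_, ?_⟩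
  · linarith [eIn_le_dartCount_div_two G (part c i), hparts i]
  · linarith [monoDartCount_add_two_mul_crossTotal G c]
end

section
/- Every finite simple graph G with m edges admits a 3-partition (V_1, V_2, V_3) such that for every i ∈ {1, 2, 3}: 6·e(V_i) + (3/2)·Σ_{j≠i} e(V_j) ≤ m. -/
open Finset

variable {V : Type*} [Fintype V] [DecidableEq V]

/-!
Call a part `V_i` overfull if it violates the bound. Start from a maximum `3`-cut with an overfull
part `X`. If some vertex of `X` has at least a third of its neighbours in `X`, maximality forces it
to have equally many neighbours in each part, so moving it out of `X` gives another maximum cut, in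
which only `X` can be overfull. Repeat until nothing is overfull or every vertex of `X` has less
than a third of its neighbours in `X`. From then on, delete the vertices of `X` one at a time, each
time recutting the complement of `X` optimally into two parts. As long as `X` is overfull, the next
deletion makes neither of the two other parts overfull, and `X` cannot be overfull once empty, so
at some point no part is.
-/

section EdgeCounts

variable {α κ : Type*} [Fintype α] [DecidableEq κ] (G : SimpleGraph α) [DecidableRel G.Adj]

/-- The number of neighbours of `v` that the colouring `c` gives colour `i`. The colours stand for
the parts of a vertex partition; adjacent vertices may share a colour. -/
def colorDegree (c : α → κ) (v : α) (i : κ) : ℕ := #{u | G.Adj v u ∧ c u = i}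

/-- The number of ordered adjacent pairs coloured `(i, j)` by `c`. For `i = j` this is twice the
number of edges inside the part `i`. -/
def colorPairs (c : α → κ) (i j : κ) : ℕ := #(G.interedges {v | c v = i} {v | c v = j})

/-- The number of ordered adjacent pairs whose two ends have the same colour, that is, twice the
number of edges that do not cross the partition given by `c`. -/
def monoPairs [Fintype κ] (c : α → κ) : ℕ := ∑ i, colorPairs G c i i

lemma colorPairs_comm (c : α → κ) (i j : κ) : colorPairs G c i j = colorPairs G c j i :=
  have := G.symm
  Rel.card_interedges_comm _ _

lemma colorPairs_eq_sum_ite (c : α → κ) (i j : κ) :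
    colorPairs G c i j = ∑ u, ∑ w, if c u = i ∧ c w = j ∧ G.Adj u w then 1 else 0 := by
  rw [colorPairs, ← Fintype.sum_prod_type', ← card_filter]
  congr 1
  ext p
  simp [SimpleGraph.mem_interedges_iff]

lemma colorPairs_eq_sum_colorDegree (c : α → κ) (i j : κ) :
    colorPairs G c i j = ∑ v with c v = i, colorDegree G c v j := by
  simp only [colorPairs_eq_sum_ite, colorDegree, card_filter, sum_filter]
  refine sum_congr rfl fun u _ ↦ ?_
  by_cases hu : c u = i <;> simp [hu, and_comm]

lemma colorDegree_le_card_erase [DecidableEq α] (c : α → κ) (v : α) (i : κ) :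
    colorDegree G c v i ≤ #(({u | c u = i} : Finset α).erase v) := by
  refine card_le_card fun u hu ↦ ?_
  obtain ⟨hvu, hui⟩ := by simpa using hu
  simpa using And.intro hvu.ne' hui

lemma sum_colorDegree [Fintype κ] (c : α → κ) (v : α) : ∑ i, colorDegree G c v i = G.degree v := by
  rw [← G.card_neighborFinset_eq_degree, card_eq_sum_card_fiberwise (f := c) (t := univ) (by simp)]
  refine sum_congr rfl fun i _ ↦ congr_arg card ?_
  ext u
  simp

lemma sum_colorPairs_right [Fintype κ] (c : α → κ) (i : κ) :
    ∑ j, colorPairs G c i j = ∑ v with c v = i, G.degree v := by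
  simp only [colorPairs_eq_sum_colorDegree, ← sum_colorDegree G c]
  exact sum_comm

lemma sum_sum_colorPairs [Fintype κ] (c : α → κ) :
    ∑ i, ∑ j, colorPairs G c i j = ∑ v, G.degree v := by
  simp only [sum_colorPairs_right, sum_fiberwise]

lemma two_mul_eIn_le_colorPairs [DecidableEq α] (c : α → κ) (i : κ) :
    2 * eIn G {v | c v = i} ≤ colorPairs G c i i := by
  refine (Nat.mul_div_le _ 2).trans (card_le_card fun p hp ↦ ?_)
  simp only [mem_filter, mem_univ, true_and] at hp
  simpa [SimpleGraph.mem_interedges_iff, and_comm, and_assoc] using hp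

lemma isKPartition_colorClasses {k : ℕ} (c : α → Fin k) :
    IsKPartition fun i ↦ ({v | c v = i} : Finset α) := by
  refine ⟨fun i j hij ↦ disjoint_filter.2 fun v _ hi hj ↦ hij (hi.symm.trans hj), fun v ↦ ?_⟩
  exact ⟨c v, by simp⟩

lemma colorPairs_le_of_colorDegree_le {c : α → κ} {i j : κ}
    (h : ∀ v, c v = i → colorDegree G c v i ≤ colorDegree G c v j) :
    colorPairs G c i i ≤ colorPairs G c i j := by
  simp only [colorPairs_eq_sum_colorDegree]
  exact sum_le_sum fun v hv ↦ h v (by simpa using hv)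

lemma colorPairs_self_congr {c c' : α → κ} {i : κ} (h : ∀ u, c u = i ↔ c' u = i) :
    colorPairs G c i i = colorPairs G c' i i := by
  simp only [colorPairs, h]

end EdgeCounts

lemma sum_sum_eq_of_diag_eq_zero {α M : Type*} [Fintype α] [DecidableEq α] [AddCommMonoid M]
    (f : α → α → M) (v : α) (hf : f v v = 0) :
    ∑ u, ∑ w, f u w = ∑ u ∈ univ.erase v, ∑ w ∈ univ.erase v, f u w
      + ∑ w ∈ univ.erase v, f v w + ∑ u ∈ univ.erase v, f u v := by
  have split_off (g : α → M) : ∑ u, g u = g v + ∑ u ∈ univ.erase v, g u :=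
    (add_sum_erase univ g (mem_univ v)).symm
  simp only [split_off, sum_add_distrib, hf, zero_add]
  abel

section Recolouring

variable {α κ : Type*} [Fintype α] [DecidableEq α] [DecidableEq κ]
  (G : SimpleGraph α) [DecidableRel G.Adj]

/- `r i j` counts the pairs coloured `(i, j)` that avoid `v`. -/
lemma exists_colorPairs_update_eq (c : α → κ) (v : α) :
    ∃ r : κ → κ → ℕ, ∀ a i j, colorPairs G (Function.update c v a) i j =
      r i j + (if a = i then colorDegree G c v j else 0)
        + if a = j then colorDegree G c v i else 0 := by
  have colorDegree_eq (l : κ) :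
      colorDegree G c v l = ∑ u ∈ univ.erase v, if c u = l ∧ G.Adj v u then 1 else 0 := by
    rw [colorDegree, card_filter, ← add_sum_erase _ _ (mem_univ v)]
    simp [and_comm]
  refine ⟨fun i j ↦ ∑ u ∈ univ.erase v, ∑ w ∈ univ.erase v,
    if c u = i ∧ c w = j ∧ G.Adj u w then 1 else 0, fun a i j ↦ ?_⟩
  rw [colorPairs_eq_sum_ite, sum_sum_eq_of_diag_eq_zero _ v (by simp), colorDegree_eq,
    colorDegree_eq]
  have update_eq {u : α} (hu : u ∈ univ.erase v) : Function.update c v a u = c u :=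
    Function.update_of_ne (ne_of_mem_erase hu) _ _
  congr 1
  · congr 1
    · exact sum_congr rfl fun u hu ↦ sum_congr rfl fun w hw ↦ by simp [update_eq hu, update_eq hw]
    · split_ifs with ha
      · subst ha
        exact sum_congr rfl fun w hw ↦ by simp [update_eq hw]
      · simp [ha]
  · split_ifs with ha
    · subst ha
      exact sum_congr rfl fun u hu ↦ by simp [update_eq hu, G.adj_comm]
    · simp [ha]

lemma monoPairs_update [Fintype κ] (c : α → κ) (v : α) (a : κ) :
    monoPairs G (Function.update c v a) + 2 * colorDegree G c v (c v) =
      monoPairs G c + 2 * colorDegree G c v a := by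
  obtain ⟨r, hr⟩ := exists_colorPairs_update_eq G c v
  have monoPairs_eq (b : κ) : monoPairs G (Function.update c v b) =
      ∑ i, r i i + 2 * colorDegree G c v b := by
    simp only [monoPairs, hr, sum_add_distrib, sum_ite_eq, mem_univ, if_true]
    ring
  have monoPairs_self := monoPairs_eq (c v)
  rw [Function.update_eq_self] at monoPairs_self
  rw [monoPairs_eq, monoPairs_self]
  ring

end Recolouring

section Erase

variable {α κ : Type*} {c c' : α → κ} {i : κ} {v : α}

lemma update_eq_iff_of_erase [DecidableEq α] (hv : c v = i)
    (hc' : ∀ u, c' u = i ↔ c u = i ∧ u ≠ v) (u : α) :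
    Function.update c' v i u = i ↔ c u = i := by
  rcases eq_or_ne u v with rfl | hu <;> simp [*]

variable [Fintype α] [DecidableEq κ]

lemma colorClass_eq_erase [DecidableEq α] (hc' : ∀ u, c' u = i ↔ c u = i ∧ u ≠ v) :
    ({u | c' u = i} : Finset α) = ({u | c u = i} : Finset α).erase v := by
  ext u
  simp [hc', and_comm]

lemma card_colorClass_lt_of_erase (hv : c v = i) (hc' : ∀ u, c' u = i ↔ c u = i ∧ u ≠ v) :
    #{u | c' u = i} < #{u | c u = i} := by
  classical
  rw [colorClass_eq_erase hc']
  exact card_erase_lt_of_mem (by simpa using hv)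

variable {G : SimpleGraph α} [DecidableRel G.Adj]

lemma colorDegree_eq_of_erase (hc' : ∀ u, c' u = i ↔ c u = i ∧ u ≠ v) :
    colorDegree G c' v i = colorDegree G c v i :=
  congr_arg card <| filter_congr fun u _ ↦ and_congr_right fun hvu ↦ by simp [hc', hvu.ne']

lemma colorPairs_add_of_erase (hv : c v = i) (hc' : ∀ u, c' u = i ↔ c u = i ∧ u ≠ v) :
    colorPairs G c' i i + 2 * colorDegree G c v i = colorPairs G c i i := by
  classical
  obtain ⟨r, hr⟩ := exists_colorPairs_update_eq G c' v
  have hvi : c' v ≠ i := by simp [hc']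
  have hself := hr (c' v) i i
  rw [Function.update_eq_self, if_neg hvi, add_zero, add_zero] at hself
  rw [← colorPairs_self_congr G (update_eq_iff_of_erase hv hc'), hr, hself, if_pos rfl,
    colorDegree_eq_of_erase hc']
  ring

end Erase

section Minimality

variable {α κ : Type*} [Fintype α] [Fintype κ] [DecidableEq κ]
  (G : SimpleGraph α) [DecidableRel G.Adj]

/-- The colouring `c` is a maximum cut: it has as few monochromatic edges as possible. -/
def IsMonoMin (c : α → κ) : Prop := ∀ c' : α → κ, monoPairs G c ≤ monoPairs G c'

/-- The colouring `c` has as few monochromatic edges as possible among the colourings with the same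
vertices of colour `i`; that is, it restricts to a maximum cut of the other vertices. -/
def IsMonoMinFixing (i : κ) (c : α → κ) : Prop :=
  ∀ c' : α → κ, (∀ v, c' v = i ↔ c v = i) → monoPairs G c ≤ monoPairs G c'

variable {G} {c : α → κ} {i j k : κ}

lemma IsMonoMin.isMonoMinFixing (hc : IsMonoMin G c) (i : κ) : IsMonoMinFixing G i c :=
  fun c' _ ↦ hc c'

lemma exists_isMonoMin [Nonempty κ] : ∃ c : α → κ, IsMonoMin G c :=
  Finite.exists_min (monoPairs G)

lemma exists_isMonoMinFixing (c : α → κ) (i : κ) :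
    ∃ c', (∀ v, c' v = i ↔ c v = i) ∧ IsMonoMinFixing G i c' := by
  obtain ⟨c', hc', hmin⟩ := Set.exists_min_image {c' : α → κ | ∀ v, c' v = i ↔ c v = i}
    (monoPairs G) (Set.toFinite _) ⟨c, fun _ ↦ Iff.rfl⟩
  exact ⟨c', hc', fun c'' h ↦ hmin c'' fun v ↦ (h v).trans (hc' v)⟩

lemma colorDegree_le_of_monoPairs_le_update [DecidableEq α] {v : α}
    (h : monoPairs G c ≤ monoPairs G (Function.update c v j)) :
    colorDegree G c v (c v) ≤ colorDegree G c v j := by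
  have := monoPairs_update G c v j
  lia

lemma IsMonoMin.colorDegree_le (hc : IsMonoMin G c) (v : α) (j : κ) :
    colorDegree G c v (c v) ≤ colorDegree G c v j := by
  classical exact colorDegree_le_of_monoPairs_le_update (hc _)

lemma IsMonoMin.colorPairs_le (hc : IsMonoMin G c) (i j : κ) :
    colorPairs G c i i ≤ colorPairs G c i j :=
  colorPairs_le_of_colorDegree_le G fun v hv ↦ hv ▸ hc.colorDegree_le v j

lemma IsMonoMinFixing.colorPairs_le (hc : IsMonoMinFixing G i c) (hj : j ≠ i) (hk : k ≠ i) :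
    colorPairs G c j j ≤ colorPairs G c j k := by
  classical
  refine colorPairs_le_of_colorDegree_le G fun v hv ↦ ?_
  subst hv
  refine colorDegree_le_of_monoPairs_le_update (hc _ fun u ↦ ?_)
  rcases eq_or_ne u v with rfl | hu <;> simp [*]

lemma IsMonoMin.update_of_colorDegree_eq [DecidableEq α] (hc : IsMonoMin G c) {v : α}
    (h : colorDegree G c v j = colorDegree G c v (c v)) :
    IsMonoMin G (Function.update c v j) := by
  have := monoPairs_update G c v j
  intro c'
  have := hc c'
  lia

lemma IsMonoMin.colorDegree_eq_of_degree_le (hc : IsMonoMin G c) {v : α}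
    (h : G.degree v ≤ Fintype.card κ * colorDegree G c v (c v)) (j : κ) :
    colorDegree G c v j = colorDegree G c v (c v) := by
  have hle (a : κ) (_ : a ∈ univ) : colorDegree G c v (c v) ≤ colorDegree G c v a :=
    hc.colorDegree_le v a
  have hsum : ∑ _a : κ, colorDegree G c v (c v) = ∑ a, colorDegree G c v a :=
    (sum_le_sum hle).antisymm (by simpa [sum_colorDegree] using h)
  exact ((sum_eq_sum_iff_of_le hle).1 hsum j (mem_univ j)).symm

lemma IsMonoMinFixing.monoPairs_le_of_erase (hc : IsMonoMinFixing G i c) {c' : α → κ} {v : α}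
    (hv : c v = i) (hc' : ∀ u, c' u = i ↔ c u = i ∧ u ≠ v) :
    monoPairs G c ≤ monoPairs G c' + 2 * colorDegree G c v i := by
  classical
  have hle := hc _ (update_eq_iff_of_erase hv hc')
  have hupdate := monoPairs_update G c' v i
  rw [colorDegree_eq_of_erase hc'] at hupdate
  lia

end Minimality

section ThreeColours

variable {α : Type*} [Fintype α] (G : SimpleGraph α) [DecidableRel G.Adj]

/-- The part `V_i` of the `3`-partition given by `c` is too dense. With `e(V_j)` equal to half of
`colorPairs G c j j`, this is `m < 6 e(V_i) + (3/2) ∑_{j ≠ i} e(V_j)` multiplied by `4`. -/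
def Overfull (c : α → Fin 3) (i : Fin 3) : Prop :=
  2 * ∑ v, G.degree v < 9 * colorPairs G c i i + 3 * monoPairs G c

variable {G} {c c' : α → Fin 3} {i j k : Fin 3}

lemma sum_fin_three_of_ne {M : Type*} [AddCommMonoid M] (f : Fin 3 → M)
    (hij : i ≠ j) (hik : i ≠ k) (hjk : j ≠ k) :
    ∑ l, f l = f i + f j + f k := by
  have : (univ : Finset (Fin 3)) = {i, j, k} := by decide +revert
  rw [this, sum_insert (by simp [hij, hik]), sum_pair hjk, add_assoc]

lemma sum_degree_eq_of_ne (c : α → Fin 3) (hij : i ≠ j) (hik : i ≠ k) (hjk : j ≠ k) :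
    ∑ v, G.degree v = monoPairs G c
      + 2 * (colorPairs G c i j + colorPairs G c i k + colorPairs G c j k) := by
  simp only [← sum_sum_colorPairs G c, monoPairs, sum_fin_three_of_ne _ hij hik hjk,
    colorPairs_comm G c j i, colorPairs_comm G c k i, colorPairs_comm G c k j]
  ring

lemma IsMonoMinFixing.sum_degree_add_monoPairs_add_colorPairs_le
    (hc : IsMonoMinFixing G i c) (hj : j ≠ i) :
    2 * ∑ v with c v = i, G.degree v + monoPairs G c + 2 * colorPairs G c j j ≤
      ∑ v, G.degree v + 2 * colorPairs G c i i := by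
  obtain ⟨k, hki, hkj⟩ := Fin.exists_ne_and_ne_of_two_lt i j (by lia)
  have hjk := hc.colorPairs_le hj hki
  rw [← sum_colorPairs_right, sum_degree_eq_of_ne c hj.symm hki.symm hkj.symm,
    sum_fin_three_of_ne _ hj.symm hki.symm hkj.symm]
  lia

lemma IsMonoMinFixing.sum_degree_add_monoPairs_le (hc : IsMonoMinFixing G i c) :
    2 * ∑ v with c v = i, G.degree v + 2 * monoPairs G c ≤
      ∑ v, G.degree v + 3 * colorPairs G c i i := by
  obtain ⟨j, hj⟩ := exists_ne i
  obtain ⟨k, hki, hkj⟩ := Fin.exists_ne_and_ne_of_two_lt i j (by lia)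
  have hmono : monoPairs G c = _ := sum_fin_three_of_ne _ hj.symm hki.symm hkj.symm
  have := hc.sum_degree_add_monoPairs_add_colorPairs_le hj
  have := hc.sum_degree_add_monoPairs_add_colorPairs_le hki
  lia

variable (G) in
/-- Every vertex of colour `i` has strictly less than a third of its neighbours in colour `i`. -/
def IsSparseAt (c : α → Fin 3) (i : Fin 3) : Prop :=
  ∀ v, c v = i → 3 * colorDegree G c v i < G.degree v

lemma IsSparseAt.sum_le (h : IsSparseAt G c i) {s : Finset α} (hs : ∀ v ∈ s, c v = i) :
    3 * ∑ v ∈ s, colorDegree G c v i + #s ≤ ∑ v ∈ s, G.degree v := by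
  rw [card_eq_sum_ones, mul_sum, ← sum_add_distrib]
  exact sum_le_sum fun v hv ↦ h v (hs v hv)

lemma IsMonoMinFixing.sum_degree_add_card_lt (hc : IsMonoMinFixing G i c)
    (hover : Overfull G c i) (hsparse : IsSparseAt G c i) :
    ∑ v, G.degree v + 6 * #{v | c v = i} < 9 * colorPairs G c i i := by
  have hdegree := hc.sum_degree_add_monoPairs_le
  have hsum := hsparse.sum_le (s := {v | c v = i}) (by simp)
  rw [← colorPairs_eq_sum_colorDegree] at hsum
  rw [Overfull] at hover
  lia

/- With `n` vertices of colour `i` left in `c'` and `d = colorDegree G c v i ≤ n`, the two bounds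
leave only a window of negative width `8 * d - 12 * n - 6` for the total degree. -/
lemma IsMonoMinFixing.not_overfull_of_erase (hc : IsMonoMinFixing G i c)
    (hover : Overfull G c i) (hsparse : IsSparseAt G c i) {v : α} (hv : c v = i)
    (hmin : IsMonoMinFixing G i c') (hc' : ∀ u, c' u = i ↔ c u = i ∧ u ≠ v) (hj : j ≠ i) :
    ¬ Overfull G c' j := by
  classical
  intro hover'
  have hvmem : v ∈ ({u | c u = i} : Finset α) := by simpa using hv
  set n := #(({u | c u = i} : Finset α).erase v)
  have hd : colorDegree G c v i ≤ n := colorDegree_le_card_erase G c v i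
  have hupper : ∑ v, G.degree v + 6 * (n + 1) < 9 * colorPairs G c i i := by
    rw [card_erase_add_one hvmem]
    exact hc.sum_degree_add_card_lt hover hsparse
  have hclass : 3 * colorPairs G c i i + n ≤
      ∑ u with c' u = i, G.degree u + 3 * colorDegree G c v i := by
    rw [colorClass_eq_erase hc', colorPairs_eq_sum_colorDegree, ← add_sum_erase _ _ hvmem]
    have := hsparse.sum_le (s := ({u | c u = i} : Finset α).erase v) (by simp)
    lia
  have hlower : 9 * colorPairs G c i i + 6 * n <
      ∑ v, G.degree v + 8 * colorDegree G c v i := by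
    have hcut := hmin.sum_degree_add_monoPairs_add_colorPairs_le hj
    have hmono := hc.monoPairs_le_of_erase hv hc'
    have hpairs := colorPairs_add_of_erase (G := G) hv hc'
    rw [Overfull] at hover hover'
    lia
  lia

lemma IsSparseAt.of_erase (h : IsSparseAt G c i) {v : α}
    (hc' : ∀ u, c' u = i ↔ c u = i ∧ u ≠ v) : IsSparseAt G c' i := by
  intro u hu
  have hle : colorDegree G c' u i ≤ colorDegree G c u i :=
    card_le_card (monotone_filter_right _ fun w _ hw ↦ ⟨hw.1, ((hc' w).1 hw.2).1⟩)
  have := h u ((hc' u).1 hu).1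
  lia

lemma IsMonoMinFixing.exists_forall_not_overfull (hc : IsMonoMinFixing G i c)
    (hover : Overfull G c i) (hsparse : IsSparseAt G c i) :
    ∃ c' : α → Fin 3, ∀ j, ¬ Overfull G c' j := by
  classical
  induction hn : #{v | c v = i} using Nat.strong_induction_on generalizing c with
  | _ n ih =>
  obtain ⟨v, hv⟩ : ∃ v, c v = i := by
    by_contra! hempty
    have := hc.sum_degree_add_card_lt hover hsparse
    simp [colorPairs_eq_sum_colorDegree, hempty] at this
  obtain ⟨j, hj⟩ := exists_ne i
  obtain ⟨c', hc'_fix, hmin⟩ := exists_isMonoMinFixing (G := G) (Function.update c v j) i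
  have hc' (u : α) : c' u = i ↔ c u = i ∧ u ≠ v := by
    rw [hc'_fix]
    rcases eq_or_ne u v with rfl | hu <;> simp [*]
  by_cases hover' : Overfull G c' i
  · exact ih _ (hn ▸ card_colorClass_lt_of_erase hv hc') hmin hover' (hsparse.of_erase hc') rfl
  · refine ⟨c', fun l ↦ ?_⟩
    rcases eq_or_ne l i with rfl | hl
    · exact hover'
    · exact hc.not_overfull_of_erase hover hsparse hv hmin hc' hl

lemma Overfull.update_self [DecidableEq α] {v : α} {d : ℕ} (hd : ∀ a, colorDegree G c v a = d)
    (h : Overfull G (Function.update c v i) j) : Overfull G (Function.update c v j) j := by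
  obtain ⟨r, hr⟩ := exists_colorPairs_update_eq G c v
  have hle : colorPairs G (Function.update c v i) j j ≤
      colorPairs G (Function.update c v j) j j := by
    simp only [hr, if_true]
    split_ifs <;> lia
  have hi := monoPairs_update G c v i
  have hj := monoPairs_update G c v j
  rw [hd, hd] at hi hj
  rw [Overfull] at *
  lia

/- Once `v` is removed, leaving `r a b` pairs coloured `(a, b)`, the three parts play symmetric
roles, and minimality after putting `v` into part `a` gives `r a a + d ≤ r a b`. -/
lemma not_overfull_update_of_overfull_update [DecidableEq α] {v : α} {d : ℕ}
    (hd : ∀ a, colorDegree G c v a = d) (hmin : ∀ a, IsMonoMin G (Function.update c v a))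
    (hij : i ≠ j) (hi : Overfull G (Function.update c v i) i) :
    ¬ Overfull G (Function.update c v j) j := by
  intro hj
  obtain ⟨k, hki, hkj⟩ := Fin.exists_ne_and_ne_of_two_lt i j (by lia)
  obtain ⟨r, hr⟩ := exists_colorPairs_update_eq G c v
  simp only [hd] at hr
  have r_self_le {a b : Fin 3} (hab : a ≠ b) : r a a + d ≤ r a b ∧ r b b + d ≤ r a b := by
    have hcomm := colorPairs_comm G (Function.update c v a) a b
    have ha := (hmin a).colorPairs_le a b
    have hb := (hmin b).colorPairs_le b a
    simp only [hr, hab, hab.symm, if_true, if_false] at ha hb hcomm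
    lia
  rw [Overfull, sum_degree_eq_of_ne _ hij hki.symm hkj.symm, monoPairs,
    sum_fin_three_of_ne _ hij hki.symm hkj.symm] at hi hj
  simp only [hr, hij, hij.symm, hki.symm, hkj.symm, if_true, if_false] at hi hj
  have hle_ij := r_self_le hij
  have hle_ik := r_self_le hki.symm
  have hle_jk := r_self_le hkj.symm
  lia

lemma IsMonoMin.exists_forall_not_overfull (hc : IsMonoMin G c) (hover : Overfull G c i) :
    ∃ c' : α → Fin 3, ∀ j, ¬ Overfull G c' j := by
  classical
  induction hn : #{v | c v = i} using Nat.strong_induction_on generalizing c with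
  | _ n ih =>
  by_cases hsparse : IsSparseAt G c i
  · exact (hc.isMonoMinFixing i).exists_forall_not_overfull hover hsparse
  obtain ⟨v, rfl, hv⟩ : ∃ v, c v = i ∧ G.degree v ≤ 3 * colorDegree G c v i := by
    simpa [IsSparseAt] using hsparse
  have hd := hc.colorDegree_eq_of_degree_le hv
  have hmin (a : Fin 3) := hc.update_of_colorDegree_eq (hd a)
  obtain ⟨j, hj⟩ := exists_ne (c v)
  have herase (u : α) : Function.update c v j u = c v ↔ c u = c v ∧ u ≠ v := by
    rcases eq_or_ne u v with rfl | hu <;> simp [*]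
  by_cases hover' : Overfull G (Function.update c v j) (c v)
  · exact ih _ (hn ▸ card_colorClass_lt_of_erase rfl herase) (hmin j) hover' rfl
  refine ⟨Function.update c v j, fun l hl ↦ ?_⟩
  have hlv : c v ≠ l := fun h ↦ hover' (h ▸ hl)
  exact not_overfull_update_of_overfull_update hd hmin hlv
    (by rwa [Function.update_eq_self]) (hl.update_self hd)

variable (G) in
lemma exists_forall_not_overfull : ∃ c : α → Fin 3, ∀ i, ¬ Overfull G c i := by
  obtain ⟨c, hc⟩ := exists_isMonoMin (κ := Fin 3) (G := G)
  by_cases hover : ∃ i, Overfull G c i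
  · exact hc.exists_forall_not_overfull hover.choose_spec
  · exact ⟨c, not_exists.1 hover⟩

lemma le_card_edgeFinset_of_not_overfull [DecidableEq α] (h : ¬ Overfull G c i) :
    6 * (eIn G {v | c v = i} : ℝ) + (3 / 2) * ∑ j with j ≠ i, (eIn G {v | c v = j} : ℝ)
      ≤ (#G.edgeFinset : ℝ) := by
  have hi := two_mul_eIn_le_colorPairs G c i
  have hmono : 2 * ∑ j, eIn G {v | c v = j} ≤ monoPairs G c := by
    rw [mul_sum]
    exact sum_le_sum fun j _ ↦ two_mul_eIn_le_colorPairs G c j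
  rw [← add_sum_erase _ _ (mem_univ i), ← filter_ne'] at hmono
  rw [Overfull, G.sum_degrees_eq_twice_card_edges] at h
  have hnat : 12 * eIn G {v | c v = i} + 3 * ∑ j with j ≠ i, eIn G {v | c v = j} ≤
      2 * #G.edgeFinset := by
    lia
  rify at hnat
  linarith

end ThreeColours

/-- Every graph with `m` edges admits a 3-partition such that every part `Vᵢ` satisfies
`6·e(Vᵢ) + (3/2)·∑_{j≠i} e(Vⱼ) ≤ m`. -/
theorem stmt_5 {V : Type*} [Fintype V] [DecidableEq V]
    (G : SimpleGraph V) [DecidableRel G.Adj] (m : ℕ) (hm : m = G.edgeFinset.card) :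
    ∃ P : Fin 3 → Finset V, IsKPartition P ∧
      ∀ i : Fin 3,
        6 * (eIn G (P i) : ℝ) + (3 / 2) * ∑ j ∈ Finset.univ.filter (· ≠ i), (eIn G (P j) : ℝ)
          ≤ (m : ℝ) := by
  obtain ⟨c, hc⟩ := exists_forall_not_overfull G
  refine ⟨_, isKPartition_colorClasses c, fun i ↦ ?_⟩
  rw [hm]
  exact le_card_edgeFinset_of_not_overfull (hc i)
end
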